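/- Let m ≥ 3 be odd, set r = (m−1)/2, and let α : Fin r → ℝ satisfy α i > 0 for every i, with d_m, viewed in ℝ[X], equal to ∏_{i} (X − α i)·(X − (α i)⁻¹). Then for every even n ≥ 4 there exists an integer k > 1 such that ∏_{i} ((α i)^n + (α i)^(−n) − 2) = (∏_{i} ((α i)² + (α i)^(−2) − 2)) · (k : ℝ)²; that is, for n even the number G_{m,n} equals G_{m,2} times the square of an integer greater than one. -/

import Mathlib

open Polynomial

/-- The polynomials d_m: d_2 = 1 − X, d_3 = 1 − 3X + X²,
d_{m+1} = (1 − X)·d_m − X·d_{m−1} for m ≥ 3. -/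
noncomputable def dpoly : ℕ → Polynomial ℤ
  | 0 => 0
  | 1 => 0
  | 2 => 1 - X
  | 3 => 1 - 3 * X + X ^ 2
  | (m + 4) => (1 - X) * dpoly (m + 3) - X * dpoly (m + 2)

noncomputable def epoly : ℕ → Polynomial ℤ
  | 0 => 1
  | 1 => X - 3
  | (r + 2) => (X - 4) * epoly (r + 1) - epoly r

noncomputable def vpoly : ℕ → Polynomial ℤ
  | 0 => 0
  | 1 => 1
  | (r + 2) => X * vpoly (r + 1) - vpoly r

theorem dpoly_two_step (m : ℕ) :
    dpoly (m + 7) = (1 - 4 * X + X ^ 2) * dpoly (m + 5) - X ^ 2 * dpoly (m + 3) := by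
  have h1 : dpoly (m + 7) = (1 - X) * dpoly (m + 6) - X * dpoly (m + 5) := by
    rw [dpoly]
  have h2 : dpoly (m + 6) = (1 - X) * dpoly (m + 5) - X * dpoly (m + 4) := by
    rw [dpoly]
  have h3 : dpoly (m + 5) = (1 - X) * dpoly (m + 4) - X * dpoly (m + 3) := by
    rw [dpoly]
  rw [h1, h2]
  linear_combination X * h3

theorem dpoly_eval (r : ℕ) (x : ℝ) (hx : x ≠ 0) :
    aeval x (dpoly (2 * r + 3)) = x ^ (r + 1) * aeval (x + x⁻¹) (epoly (r + 1)) := by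
  induction r using Nat.twoStepInduction with
  | zero =>
    simp only [dpoly, epoly, map_sub, map_mul, map_add, map_pow, map_one, aeval_X, map_ofNat,
      mul_zero, zero_add]
    field_simp; ring
  | one =>
    simp only [dpoly, epoly, map_sub, map_mul, map_add, map_pow, map_one, aeval_X, map_ofNat,
      mul_zero, zero_add, mul_one]
    field_simp; ring
  | more r h1 h2 =>
    rw [show 2 * (r + 2) + 3 = 2 * r + 7 by ring, dpoly_two_step, epoly]
    rw [show 2 * (r + 1) + 3 = 2 * r + 5 by ring] at h2
    simp only [map_sub, map_mul, map_add, map_pow, map_one, aeval_X, map_ofNat, h1, h2]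
    field_simp
    ring

theorem prod_eval_int {r : ℕ} (t : Fin r → ℝ) (P : ℤ[X])
    (hP : P.map (Int.castRingHom ℝ) = ∏ i, (X - C (t i))) (Q : ℤ[X]) :
    ∃ k : ℤ, (k : ℝ) = ∏ i, aeval (t i) Q := by
  refine ⟨resultant P Q, ?_⟩
  have hdeg : (P.map (Int.castRingHom ℝ)).natDegree = P.natDegree :=
    natDegree_map_eq_of_injective (RingHom.injective_int _) _
  have hdegQ : (Q.map (Int.castRingHom ℝ)).natDegree = Q.natDegree :=
    natDegree_map_eq_of_injective (RingHom.injective_int _) _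
  have h := resultant_map_map P Q P.natDegree Q.natDegree (Int.castRingHom ℝ)
  rw [eq_intCast] at h
  rw [← h]
  nth_rw 1 [← hdeg]
  rw [resultant_eq_prod_eval _ _ _ hdegQ.le]
  · rw [hP, (monic_prod_X_sub_C t Finset.univ).leadingCoeff]
    have hroots : (∏ i, (X - C (t i))).roots = Finset.univ.val.map t := by
      have := roots_multiset_prod_X_sub_C (Finset.univ.val.map t)
      rwa [Multiset.map_map] at this
    rw [hroots, Multiset.map_map]
    simp [aeval_def, eval_map, Finset.prod]
  · rw [hP]
    exact Splits.prod fun i _ => Splits.X_sub_C _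

theorem vpoly_eval (q : ℕ) (x : ℝ) (hx : x ≠ 0) :
    (x - x⁻¹) * aeval (x + x⁻¹) (vpoly q) = x ^ q - (x⁻¹) ^ q := by
  induction q using Nat.twoStepInduction with
  | zero => simp [vpoly]
  | one => simp [vpoly]
  | more r h1 h2 =>
    rw [vpoly]
    simp only [map_sub, map_mul, aeval_X]
    have h3 : x * x⁻¹ = 1 := mul_inv_cancel₀ hx
    generalize x⁻¹ = y at *
    linear_combination (x + y) * h2 - h1 + (x ^ r - y ^ r) * h3

theorem vpoly_ge (q : ℕ) (t : ℝ) (ht : 2 ≤ t) :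
    (q : ℝ) ≤ aeval t (vpoly q) ∧ aeval t (vpoly q) + 1 ≤ aeval t (vpoly (q + 1)) := by
  induction q with
  | zero => simp [vpoly]
  | succ q ih =>
    obtain ⟨h1, h2⟩ := ih
    have hq : (0 : ℝ) ≤ q := q.cast_nonneg
    rw [vpoly]
    push_cast
    simp only [map_sub, map_mul, aeval_X]
    refine ⟨by linarith, by nlinarith⟩

theorem stmt_16 (m : ℕ) (hm : 3 ≤ m) (hmo : Odd m)
    (α : Fin ((m - 1) / 2) → ℝ) (hpos : ∀ i, 0 < α i)
    (hd : (dpoly m).map (Int.castRingHom ℝ) =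
      ∏ i, (X - C (α i)) * (X - C (α i)⁻¹))
    (n : ℕ) (hn : 4 ≤ n) (hne : Even n) :
    ∃ k : ℤ, 1 < k ∧
      ∏ i, ((α i) ^ (n : ℤ) + (α i) ^ (-(n : ℤ)) - 2) =
        (∏ i, ((α i) ^ (2 : ℤ) + (α i) ^ (-(2 : ℤ)) - 2)) * (k : ℝ) ^ 2 := by
  obtain ⟨q, rfl⟩ := hne
  obtain ⟨s, rfl⟩ := hmo
  obtain ⟨r, rfl⟩ : ∃ r, s = r + 1 := ⟨s - 1, by omega⟩
  have hr : (2 * (r + 1) + 1 - 1) / 2 = r + 1 := by omega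
  have hP : (epoly (r + 1)).map (Int.castRingHom ℝ) = ∏ i, (X - C (α i + (α i)⁻¹)) := by
    apply eq_of_infinite_eval_eq
    apply (Set.Ici_infinite (2 : ℝ)).mono
    intro y hy
    have hy2 : (2 : ℝ) ≤ y := hy
    obtain ⟨x, hx0, rfl⟩ : ∃ x : ℝ, x ≠ 0 ∧ x + x⁻¹ = y := by
      have hs := Real.sq_sqrt (show 0 ≤ y ^ 2 - 4 by nlinarith)
      have hs0 := Real.sqrt_nonneg (y ^ 2 - 4)
      have hx : (y + √(y ^ 2 - 4)) / 2 ≠ 0 := by positivity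
      refine ⟨(y + √(y ^ 2 - 4)) / 2, hx, ?_⟩
      rw [inv_eq_of_mul_eq_one_right (b := (y - √(y ^ 2 - 4)) / 2) (by linear_combination -hs / 4)]
      ring
    have h1 := dpoly_eval r x hx0
    have h2 := congrArg (eval x) hd
    rw [show 2 * r + 3 = 2 * (r + 1) + 1 by ring] at h1
    rw [eval_map, ← algebraMap_int_eq, ← aeval_def, h1, eval_prod] at h2
    show eval _ _ = eval _ _
    rw [eval_map, ← algebraMap_int_eq, ← aeval_def, eval_prod]
    have h3 : ∀ i, eval x ((X - C (α i)) * (X - C (α i)⁻¹)) =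
        x * eval (x + x⁻¹) (X - C (α i + (α i)⁻¹)) := by
      intro i
      have := (hpos i).ne'
      simp
      field_simp
      ring
    simp_rw [h3] at h2
    rw [Finset.prod_mul_distrib, Finset.prod_const, Finset.card_univ, Fintype.card_fin,
      congrArg (x ^ ·) hr] at h2
    exact mul_left_cancel₀ (pow_ne_zero _ hx0) h2
  obtain ⟨k, hk⟩ := prod_eval_int _ _ hP (vpoly q)
  have ht : ∀ i, 2 ≤ α i + (α i)⁻¹ := by
    intro i
    have := hpos i
    have h3 : α i * (α i)⁻¹ = 1 := mul_inv_cancel₀ this.ne'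
    have h4 : 0 < (α i)⁻¹ := by positivity
    nlinarith [sq_nonneg (α i - (α i)⁻¹)]
  refine ⟨k, ?_, ?_⟩
  · have hq : (2 : ℝ) ≤ q := by exact_mod_cast (show 2 ≤ q by omega)
    have : (2 : ℝ) ^ (r + 1) ≤ k := by
      rw [hk]
      calc (2 : ℝ) ^ (r + 1) = ∏ i : Fin ((2 * (r + 1) + 1 - 1) / 2), (2 : ℝ) := by
            rw [Finset.prod_const, Finset.card_univ, Fintype.card_fin, hr]
        _ ≤ _ := Finset.prod_le_prod (by simp) (fun i _ => hq.trans (vpoly_ge q _ (ht i)).1)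
    have h2 : (1 : ℝ) < 2 ^ (r + 1) := one_lt_pow₀ (by norm_num) (by omega)
    exact_mod_cast h2.trans_le this
  · rw [hk, ← Finset.prod_pow, ← Finset.prod_mul_distrib]
    apply Finset.prod_congr rfl
    intro i _
    have h0 := (hpos i).ne'
    have h := vpoly_eval q (α i) h0
    have h3 : α i * (α i)⁻¹ = 1 := mul_inv_cancel₀ h0
    have h4 : α i ^ q * (α i)⁻¹ ^ q = 1 := by rw [← mul_pow, h3, one_pow]
    rw [zpow_neg, zpow_neg, zpow_natCast, ← inv_pow, pow_add, pow_add]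
    rw [show (2 : ℤ) = ((2 : ℕ) : ℤ) by rfl, zpow_natCast, ← inv_pow]
    generalize aeval (α i + (α i)⁻¹) (vpoly q) = v at *
    generalize (α i)⁻¹ = y at *
    have h5 := congrArg (· ^ 2) h
    linear_combination -h5 + 2 * h4 - 2 * v ^ 2 * h3
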